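/- arXiv:1408.4057 — 2 statements merged into one kernel-verified Lean document; each statement's English description precedes it below -/
import Mathlib

section
/- (Lemma 5.7, bias difference bound.) For all multi-indices k, l ∈ 𝒥 and all t ∈ ℝ^d: | b_t(k ∧ l) − b_t(l) | ≤ 2 B_t(k), where k ∧ l is the componentwise minimum. -/
open MeasureTheory Real
open scoped ENNReal BigOperators

noncomputable section

/-- `Vec d` is `ℝ^d` (with the product structure, used for anisotropic statements). -/
abbrev Vec (d : ℕ) := Fin d → ℝ

/-- Samples of size `n` from `ℝ^d`. -/
abbrev Sample (d n : ℕ) := Fin n → Vec d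

/-- The largest integer strictly smaller than `b` (for `b > 0`), i.e. `⌊b⌋` in the paper's
anisotropic Hölder class notation. -/
def hfl (b : ℝ) : ℕ := ⌈b⌉₊ - 1

/-- One-dimensional Taylor polynomial of `f` at `y'` of degree `l`, evaluated at `y`. -/
def taylorPoly (f : ℝ → ℝ) (l : ℕ) (y' y : ℝ) : ℝ :=
  ∑ k ∈ Finset.range (l + 1), iteratedDeriv k f y' / (Nat.factorial k : ℝ) * (y - y') ^ k

/-- The slice of `f : ℝ^d → ℝ` along coordinate `i` through the point `x`. -/
def sliceFun {d : ℕ} (f : Vec d → ℝ) (i : Fin d) (x : Vec d) : ℝ → ℝ :=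
  fun y => f (Function.update x i y)

/-- Anisotropic Hölder condition with exponents `β = (β_1, …, β_d)` and constant `L`:
in each coordinate `i`, the slices admit derivatives up to order `⌊β i⌋` (the largest
integer strictly less than `β i`) and the Taylor remainder of degree `⌊β i⌋` is bounded
by `L |y - y'| ^ (β i)`, uniformly in the remaining coordinates. For `β i ≤ 1` this is
the usual coordinatewise Hölder condition. -/
def HolderAniso (d : ℕ) (β : Vec d) (L : ℝ) (f : Vec d → ℝ) : Prop :=
  ∀ i : Fin d,
    (∀ x : Vec d, ContDiff ℝ (hfl (β i)) (sliceFun f i x)) ∧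
    ∀ (x : Vec d) (y y' : ℝ),
      |sliceFun f i x y - taylorPoly (sliceFun f i x) (hfl (β i)) y' y| ≤ L * |y - y'| ^ (β i)

/-- `p` is a probability density on `ℝ^d` (w.r.t. Lebesgue measure). -/
def IsProbDensity (d : ℕ) (p : Vec d → ℝ) : Prop :=
  Measurable p ∧ (∀ x, 0 ≤ p x) ∧ ∫ x, p x = 1

/-- The class `𝒫_d(β, L)` of anisotropic Hölder-smooth probability densities. -/
def Pclass (d : ℕ) (β : Vec d) (L : ℝ) (p : Vec d → ℝ) : Prop :=
  IsProbDensity d p ∧ HolderAniso d β L p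

/-- The unnormalized harmonic mean `β̄ = (∑ 1/β_i)⁻¹`. -/
def betaBar {d : ℕ} (β : Vec d) : ℝ := (∑ i, (β i)⁻¹)⁻¹

/-- `c₁(β, L) = sup { ‖p‖_∞ : p ∈ 𝒫_d(β, L) }`. -/
def c1const (d : ℕ) (β : Vec d) (L : ℝ) : ℝ :=
  sSup {c | ∃ p x, Pclass d β L p ∧ c = p x}

/-- The measure on `ℝ^d` with Lebesgue density `p`. -/
def pdfMeasure (d : ℕ) (p : Vec d → ℝ) : Measure (Vec d) :=
  volume.withDensity fun x => ENNReal.ofReal (p x)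

/-- The joint law `P^{⊗n}` of an i.i.d. sample of size `n` from the density `p`. -/
def jointMeasure (d n : ℕ) (p : Vec d → ℝ) : Measure (Sample d n) :=
  Measure.pi fun _ => pdfMeasure d p

/-- The `p`-dependent rate `ψ^n_{x,β} = min{ x, (x/n)^{β̄/(2β̄+1)} }` (with `bb = β̄`). -/
def psiRate (n : ℕ) (bb x : ℝ) : ℝ := min x ((x / n) ^ (bb / (2 * bb + 1)))

end

noncomputable section

/-- `K` is a product kernel `K(x) = ∏ K_i(x_i)` whose factors are nonnegative, symmetric,
supported on `[-1,1]`, continuous on their support, integrate to one and are positive at `0`. -/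
def IsProductKernel (d : ℕ) (K : Vec d → ℝ) : Prop :=
  ∃ Ki : Fin d → (ℝ → ℝ),
    (∀ x, K x = ∏ i, Ki i (x i)) ∧
    ∀ i : Fin d,
      (∀ y, 0 ≤ Ki i y) ∧ (∀ y, Ki i (-y) = Ki i y) ∧
      (∀ y, y ∉ Set.Icc (-1 : ℝ) 1 → Ki i y = 0) ∧
      ContinuousOn (Ki i) (Set.Icc (-1) 1) ∧
      (∫ y, Ki i y = 1) ∧ 0 < Ki i 0

/-- The rescaled kernel `K_h(x) = (∏ h_i)⁻¹ K(x_1/h_1, …, x_d/h_d)`. -/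
def scaledKernel (d : ℕ) (K : Vec d → ℝ) (h : Vec d) (x : Vec d) : ℝ :=
  (∏ i, h i)⁻¹ * K (fun i => x i / h i)

/-- The kernel density estimator `p̂_{n,h}(t) = n⁻¹ ∑_i K_h(t - X_i)`. -/
def kde (d n : ℕ) (K : Vec d → ℝ) (h : Vec d) (X : Sample d n) (t : Vec d) : ℝ :=
  (n : ℝ)⁻¹ * ∑ i, scaledKernel d K h (fun j => t j - X i j)

/-- `‖K‖_sup`. -/
def KsupNorm (d : ℕ) (K : Vec d → ℝ) : ℝ := ⨆ x, |K x|

/-- `‖K‖₂² = ∫ K² dλ^d`. -/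
def K2sq (d : ℕ) (K : Vec d → ℝ) : ℝ := ∫ x, (K x) ^ 2

/-- The exact variance proxy `σ_t²(h) = n⁻¹ ((K_h)² ∗ p)(t)`. -/
def sigmaSq (d n : ℕ) (K : Vec d → ℝ) (p : Vec d → ℝ) (h : Vec d) (t : Vec d) : ℝ :=
  (n : ℝ)⁻¹ * ∫ y, (scaledKernel d K h (fun i => t i - y i)) ^ 2 * p y

/-- The truncation level `log²n / (n² ∏ h_i²)`. -/
def truncLevel (d n : ℕ) (h : Vec d) : ℝ :=
  (Real.log n) ^ 2 / ((n : ℝ) ^ 2 * (∏ i, h i) ^ 2)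

/-- `σ²_{t,trunc}(h) = max{ log²n/(n² ∏ h_i²), σ_t²(h) }`. -/
def sigmaSqTrunc (d n : ℕ) (K : Vec d → ℝ) (p : Vec d → ℝ) (h : Vec d) (t : Vec d) : ℝ :=
  max (truncLevel d n h) (sigmaSq d n K p h t)

/-- The empirical variance `σ̃_t²(h) = (n² ∏ h_i²)⁻¹ ∑_i K²((t - X_i)/h)`. -/
def sigmaTildeSq (d n : ℕ) (K : Vec d → ℝ) (h : Vec d) (X : Sample d n) (t : Vec d) : ℝ :=
  ((n : ℝ) ^ 2 * (∏ i, h i) ^ 2)⁻¹ * ∑ i, (K (fun j => (t j - X i j) / h j)) ^ 2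

/-- `σ̃²_{t,trunc}(h) = max{ log²n/(n² ∏ h_i²), σ̃_t²(h) }`. -/
def sigmaTildeSqTrunc (d n : ℕ) (K : Vec d → ℝ) (h : Vec d) (X : Sample d n) (t : Vec d) : ℝ :=
  max (truncLevel d n h) (sigmaTildeSq d n K h X t)

/-- Membership of the multi-index `j` in the dyadic grid `𝒥`, i.e. `∑ j_i ≤ ⌊log₂(n/log²n)⌋`. -/
def gridOK (d n : ℕ) (j : Fin d → ℕ) : Prop :=
  ((∑ i, j i : ℕ) : ℝ) ≤ Real.logb 2 ((n : ℝ) / (Real.log n) ^ 2)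

/-- The bandwidth `(2^{-j_1}, …, 2^{-j_d})` associated with a multi-index `j`. -/
def bwOf (d : ℕ) (j : Fin d → ℕ) : Vec d := fun i => (2 : ℝ) ^ (-(j i : ℝ))

/-- The bias upper bound `B_t(h) = L ∑_i c_{9,i}(β) h_i^{β_i}`,
with `c_{9,i}(β) = ∫ |x_i|^{β_i} |K(x)| dλ^d(x)`. -/
def biasBound (d : ℕ) (K : Vec d → ℝ) (β : Vec d) (L : ℝ) (h : Vec d) : ℝ :=
  L * ∑ i, (∫ x : Vec d, |x i| ^ (β i) * |K x|) * h i ^ (β i)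

/-- The bias `b_t(h) = p(t) - (K_h ∗ p)(t)`. -/
def biasAt (d : ℕ) (K : Vec d → ℝ) (p : Vec d → ℝ) (h : Vec d) (t : Vec d) : ℝ :=
  p t - ∫ y, scaledKernel d K h (fun i => t i - y i) * p y

end

/-- Coordinatewise dilation scales integrals over `ℝ^d` by the inverse of the Jacobian. -/
lemma integral_comp_mul_coord {d : ℕ} (h : Vec d) (hh : ∀ i, h i ≠ 0) (g : Vec d → ℝ) :
    ∫ x, g x = |∏ i, h i| * ∫ x : Vec d, g (fun i => h i * x i) := by
  have hdet : (Matrix.diagonal h).det ≠ 0 := by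
    rw [Matrix.det_diagonal]; exact Finset.prod_ne_zero_iff.2 fun i _ => hh i
  let e : Vec d ≃ₜ Vec d := Homeomorph.piCongrRight fun i => Homeomorph.mulLeft₀ (h i) (hh i)
  have he : ⇑(Matrix.toLin' (Matrix.diagonal h)) = ⇑e := by
    funext x i
    simp only [Matrix.toLin'_apply, Matrix.mulVec_diagonal]
    rfl
  have hmap := Real.smul_map_diagonal_volume_pi hdet
  rw [Matrix.det_diagonal, he] at hmap
  conv_lhs => rw [← hmap]
  rw [integral_smul_measure, e.measurableEmbedding.integral_map,
    ENNReal.toReal_ofReal (abs_nonneg _), smul_eq_mul]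
  rfl

/-- A product kernel is nonnegative. -/
lemma IsProductKernel.nonneg {d : ℕ} {K : Vec d → ℝ} (hK : IsProductKernel d K) (x : Vec d) :
    0 ≤ K x := by
  obtain ⟨Ki, hprod, hKi⟩ := hK
  rw [hprod]
  exact Finset.prod_nonneg fun i _ => (hKi i).1 _

/-- A product kernel is supported on the cube `[-1, 1]^d`. -/
lemma IsProductKernel.abs_le_one {d : ℕ} {K : Vec d → ℝ} (hK : IsProductKernel d K) {x : Vec d}
    (hx : K x ≠ 0) (i : Fin d) : |x i| ≤ 1 := by
  obtain ⟨Ki, hprod, hKi⟩ := hK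
  by_contra hi
  refine hx ?_
  rw [hprod]
  refine Finset.prod_eq_zero (Finset.mem_univ i) ((hKi i).2.2.1 _ fun hmem => hi ?_)
  exact abs_le.2 hmem

/-- A product kernel is integrable. -/
lemma IsProductKernel.integrable {d : ℕ} {K : Vec d → ℝ} (hK : IsProductKernel d K) :
    Integrable K := by
  obtain ⟨Ki, hprod, hKi⟩ := hK
  rw [show K = fun x => ∏ i, Ki i (x i) from funext hprod]
  refine Integrable.fintype_prod fun i => Integrable.of_integral_ne_zero ?_
  rw [(hKi i).2.2.2.2.1]
  exact one_ne_zero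

/-- A product kernel is invariant under the reflection of one coordinate. -/
lemma IsProductKernel.reflect {d : ℕ} {K : Vec d → ℝ} (hK : IsProductKernel d K) (i : Fin d)
    (x : Vec d) : K (fun j => Function.update (1 : Vec d) i (-1) j * x j) = K x := by
  obtain ⟨Ki, hprod, hKi⟩ := hK
  rw [hprod, hprod]
  refine Finset.prod_congr rfl fun j _ => ?_
  by_cases hj : j = i
  · subst hj
    simp [(hKi j).2.1]
  · simp [hj]

/-- The product of a kernel with a measurable function bounded by `C` on the cube `[-1, 1]^d`
is integrable. -/
lemma IsProductKernel.integrable_mul {d : ℕ} {K : Vec d → ℝ} (hK : IsProductKernel d K)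
    {f : Vec d → ℝ} (hf : Measurable f) {C : ℝ} (hC : ∀ x, (∀ i, |x i| ≤ 1) → |f x| ≤ C) :
    Integrable fun x => K x * f x := by
  refine (hK.integrable.const_mul C).mono'
    (hK.integrable.aestronglyMeasurable.mul hf.aestronglyMeasurable) (.of_forall fun x => ?_)
  rw [Real.norm_eq_abs, abs_mul, abs_of_nonneg (hK.nonneg x)]
  by_cases hx : K x = 0
  · simp [hx]
  · rw [mul_comm]
    exact mul_le_mul_of_nonneg_right (hC x fun i => hK.abs_le_one hx i) (hK.nonneg x)

/-- Reflecting one coordinate of the integrand does not change its integral against a product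
kernel. -/
lemma IsProductKernel.integral_reflect {d : ℕ} {K : Vec d → ℝ} (hK : IsProductKernel d K)
    (i : Fin d) (f : Vec d → ℝ) :
    ∫ x, K x * f x = ∫ x, K x * f (fun j => Function.update (1 : Vec d) i (-1) j * x j) := by
  have hne : ∀ j, Function.update (1 : Vec d) i (-1) j ≠ 0 := fun j => by
    by_cases hj : j = i
    · subst hj; simp
    · simp [hj]
  rw [integral_comp_mul_coord _ hne, Finset.prod_update_of_mem (Finset.mem_univ i)]
  simp [hK.reflect]

/-- The bias written in terms of the unscaled kernel. -/
lemma biasAt_eq {d : ℕ} (K p : Vec d → ℝ) (h : Vec d) (hh : ∀ i, 0 < h i) (t : Vec d) :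
    biasAt d K p h t = p t - ∫ x, K x * p (fun i => t i - h i * x i) := by
  have hpos : 0 < ∏ i, h i := Finset.prod_pos fun i _ => hh i
  rw [biasAt, ← integral_sub_left_eq_self _ volume t,
    integral_comp_mul_coord h fun i => (hh i).ne', ← integral_const_mul]
  congr 2
  funext x
  have hdiv : (fun i => h i * x i / h i) = x := by
    funext i
    exact mul_div_cancel_left₀ _ (hh i).ne'
  simp only [scaledKernel, Pi.sub_apply, sub_sub_cancel, hdiv, abs_of_pos hpos]
  rw [← mul_assoc, mul_inv_cancel_left₀ hpos.ne']
  rfl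

/-- For exponents at most two, the Hölder condition is an affine approximation of the slices. -/
lemma HolderAniso.exists_affine {d : ℕ} {β : Vec d} {L : ℝ} {p : Vec d → ℝ}
    (hp : HolderAniso d β L p) {i : Fin d} (hβ : β i ≤ 2) (x : Vec d) (y' : ℝ) :
    ∃ c : ℝ, ∀ y, |p (Function.update x i y) - (p (Function.update x i y') + c * (y - y'))| ≤
      L * |y - y'| ^ β i := by
  have hle : hfl (β i) ≤ 1 := by
    have : ⌈β i⌉₊ ≤ 2 := Nat.ceil_le.2 (by exact_mod_cast hβ)
    unfold hfl
    omega
  have hT := fun y => (hp i).2 x y y'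
  rcases Nat.le_one_iff_eq_zero_or_eq_one.1 hle with h0 | h1
  · refine ⟨0, fun y => ?_⟩
    simpa [h0, taylorPoly, sliceFun] using hT y
  · refine ⟨deriv (sliceFun p i x) y', fun y => ?_⟩
    simpa [h1, taylorPoly, sliceFun, Finset.sum_range_succ] using hT y

/-- The symmetric second difference of a slice is controlled by the Hölder constant. -/
lemma HolderAniso.abs_symm_diff_le {d : ℕ} {β : Vec d} {L : ℝ} {p : Vec d → ℝ}
    (hp : HolderAniso d β L p) {i : Fin d} (hβ : β i ≤ 2) (x : Vec d) (y s : ℝ) :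
    |p (Function.update x i (y - s)) + p (Function.update x i (y + s)) -
      2 * p (Function.update x i y)| ≤ 2 * (L * |s| ^ β i) := by
  obtain ⟨c, hc⟩ := hp.exists_affine hβ x y
  have h1 := abs_le.1 (hc (y - s))
  have h2 := abs_le.1 (hc (y + s))
  rw [sub_sub_cancel_left, abs_neg] at h1
  rw [add_sub_cancel_left] at h2
  exact abs_le.2 ⟨by linarith, by linarith⟩

/-- Nonnegativity turns the Hölder condition into a growth bound along slices. -/
lemma HolderAniso.update_le {d : ℕ} {β : Vec d} {L : ℝ} {p : Vec d → ℝ}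
    (hp : HolderAniso d β L p) (hp0 : ∀ x, 0 ≤ p x) (hL : 0 < L) {i : Fin d}
    (hβ0 : 0 < β i) (hβ : β i ≤ 2) (x : Vec d) {y y' : ℝ} (hy : |y - y'| ≤ 1) :
    p (Function.update x i y) ≤ 2 * p (Function.update x i y') + 2 * L := by
  obtain ⟨c, hc⟩ := hp.exists_affine hβ x y'
  have h1 := abs_le.1 (hc (y' + 1))
  have h2 := abs_le.1 (hc (y' - 1))
  have h3 := abs_le.1 (hc y)
  simp only [add_sub_cancel_left, sub_sub_cancel_left, abs_neg, abs_one, Real.one_rpow] at h1 h2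
  have hcle : |c| ≤ p (Function.update x i y') + L :=
    abs_le.2 ⟨by linarith [hp0 (Function.update x i (y' + 1))],
      by linarith [hp0 (Function.update x i (y' - 1))]⟩
  have hmul : c * (y - y') ≤ |c| :=
    (le_abs_self _).trans (by rw [abs_mul]; exact mul_le_of_le_one_right (abs_nonneg c) hy)
  have hpow : L * |y - y'| ^ β i ≤ L :=
    mul_le_of_le_one_right hL.le (Real.rpow_le_one (abs_nonneg _) hy hβ0.le)
  linarith

/-- Hölder densities are bounded on unit cubes. -/
lemma HolderAniso.exists_bound {d : ℕ} {β : Vec d} {L : ℝ} {p : Vec d → ℝ}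
    (hp : HolderAniso d β L p) (hp0 : ∀ x, 0 ≤ p x) (hL : 0 < L)
    (hβ : ∀ i, 0 < β i ∧ β i ≤ 2) (t : Vec d) :
    ∃ C : ℝ, ∀ x : Vec d, (∀ i, |x i - t i| ≤ 1) → p x ≤ C := by
  suffices H : ∀ s : Finset (Fin d), ∃ C : ℝ, ∀ x : Vec d,
      (∀ i, |x i - t i| ≤ 1) → (∀ i ∉ s, x i = t i) → p x ≤ C by
    obtain ⟨C, hC⟩ := H Finset.univ
    exact ⟨C, fun x hx => hC x hx fun i hi => absurd (Finset.mem_univ i) hi⟩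
  intro s
  induction s using Finset.induction_on with
  | empty =>
    refine ⟨p t, fun x _ hx => le_of_eq ?_⟩
    rw [show x = t from funext fun i => hx i (Finset.notMem_empty i)]
  | insert i s _ ih =>
    obtain ⟨C, hC⟩ := ih
    refine ⟨2 * C + 2 * L, fun x hx hxs => ?_⟩
    have hstep := hp.update_le hp0 hL (hβ i).1 (hβ i).2 x (hx i)
    rw [Function.update_eq_self] at hstep
    have hbase : p (Function.update x i (t i)) ≤ C := by
      refine hC _ (fun j => ?_) fun j hj => ?_
      · by_cases hji : j = i
        · subst hji; simp
        · simpa [hji] using hx j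
      · by_cases hji : j = i
        · subst hji; simp
        · simpa [hji] using hxs j (by simp [hji, hj])
    linarith

/-- For bandwidths at most one, the integrand of the smoothed density is integrable. -/
lemma Pclass.integrable_kernel_mul {d : ℕ} {K : Vec d → ℝ} (hK : IsProductKernel d K)
    {β : Vec d} (hβ : ∀ i, 0 < β i ∧ β i ≤ 2) {L : ℝ} (hL : 0 < L)
    {p : Vec d → ℝ} (hp : Pclass d β L p) (t : Vec d) {h : Vec d} (hh : ∀ i, |h i| ≤ 1) :
    Integrable fun x => K x * p (fun i => t i - h i * x i) := by
  obtain ⟨⟨hmeas, hp0, -⟩, hhol⟩ := hp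
  obtain ⟨C, hC⟩ := hhol.exists_bound hp0 hL hβ t
  have hM : Measurable fun x : Vec d => fun i => t i - h i * x i := by fun_prop
  refine hK.integrable_mul (hmeas.comp hM) (C := C) fun x hx => ?_
  rw [abs_of_nonneg (hp0 _)]
  refine hC _ fun i => ?_
  rw [sub_sub_cancel_left, abs_neg, abs_mul]
  exact mul_le_one₀ (hh i) (abs_nonneg _) (hx i)

/-- Shrinking one bandwidth to zero changes the smoothed density by at most the corresponding
term of the bias bound. -/
lemma Pclass.abs_smooth_update_sub_le {d : ℕ} {K : Vec d → ℝ} (hK : IsProductKernel d K)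
    {β : Vec d} (hβ : ∀ i, 0 < β i ∧ β i ≤ 2) {L : ℝ} (hL : 0 < L)
    {p : Vec d → ℝ} (hp : Pclass d β L p) (t : Vec d) {h : Vec d} (hh : ∀ i, |h i| ≤ 1)
    (i : Fin d) {a : ℝ} (ha0 : 0 ≤ a) (ha : a ≤ 1) :
    |(∫ x, K x * p (fun j => t j - Function.update h i a j * x j)) -
        ∫ x, K x * p (fun j => t j - Function.update h i 0 j * x j)| ≤
      L * ((∫ x : Vec d, |x i| ^ β i * |K x|) * a ^ β i) := by
  have hbound : ∀ b : ℝ, |b| ≤ 1 → ∀ j, |Function.update h i b j| ≤ 1 := fun b hb j => by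
    by_cases hj : j = i
    · subst hj; simpa using hb
    · simpa [hj] using hh j
  have hint := fun b hb => hp.integrable_kernel_mul hK hβ hL t (hbound b hb)
  have hslice : ∀ (b : ℝ) (x : Vec d), (fun j => t j - Function.update h i b j * x j) =
      Function.update (fun j => t j - h j * x j) i (t i - b * x i) := fun b x => by
    funext j
    by_cases hj : j = i
    · subst hj; simp
    · simp [hj]
  have hrefl : ∀ x : Vec d, (fun j => t j - Function.update h i a j *
        (Function.update (1 : Vec d) i (-1) j * x j)) =
      fun j => t j - Function.update h i (-a) j * x j := fun x => by
    funext j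
    by_cases hj : j = i
    · subst hj; simp
    · simp [hj]
  have ha' : |a| ≤ 1 := by rwa [abs_of_nonneg ha0]
  have ha'' : |(-a)| ≤ 1 := by rwa [abs_neg]
  have hzero : |(0 : ℝ)| ≤ 1 := by simp
  have hneg : (∫ x, K x * p (fun j => t j - Function.update h i a j * x j)) =
      ∫ x, K x * p (fun j => t j - Function.update h i (-a) j * x j) := by
    rw [hK.integral_reflect i fun x => p (fun j => t j - Function.update h i a j * x j)]
    simp only [hrefl]
  have hdom : Integrable fun x : Vec d => K x * |x i| ^ β i := by
    have hm : Measurable fun x : Vec d => |x i| ^ β i := by fun_prop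
    refine hK.integrable_mul hm (C := 1) fun x hx => ?_
    rw [abs_of_nonneg (by positivity)]
    exact Real.rpow_le_one (abs_nonneg _) (hx i) (hβ i).1.le
  have hsymm : |∫ x, (K x * p (fun j => t j - Function.update h i a j * x j) +
        K x * p (fun j => t j - Function.update h i (-a) j * x j) -
        2 * (K x * p (fun j => t j - Function.update h i 0 j * x j)))| ≤
      ∫ x : Vec d, 2 * L * a ^ β i * (K x * |x i| ^ β i) := by
    rw [← Real.norm_eq_abs]
    refine norm_integral_le_of_norm_le (hdom.const_mul _) (.of_forall fun x => ?_)
    have hd := hp.2.abs_symm_diff_le (hβ i).2 (fun j => t j - h j * x j) (t i) (a * x i)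
    rw [hslice, hslice, hslice, neg_mul, sub_neg_eq_add, zero_mul, sub_zero, Real.norm_eq_abs]
    rw [abs_mul, abs_of_nonneg ha0, Real.mul_rpow ha0 (abs_nonneg _)] at hd
    have hmul := mul_le_mul_of_nonneg_left hd (hK.nonneg x)
    rw [← abs_of_nonneg (hK.nonneg x), ← abs_mul, abs_of_nonneg (hK.nonneg x)] at hmul
    refine (le_of_eq ?_).trans (hmul.trans (le_of_eq ?_))
    · congr 1; ring
    · ring
  rw [integral_sub ((hint a ha').fun_add (hint (-a) ha'')) ((hint 0 hzero).const_mul 2),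
    integral_add (hint a ha') (hint (-a) ha''), integral_const_mul, integral_const_mul,
    ← hneg] at hsymm
  have hcomm : (∫ x : Vec d, |x i| ^ β i * |K x|) = ∫ x : Vec d, K x * |x i| ^ β i := by
    congr 1
    funext x
    rw [abs_of_nonneg (hK.nonneg x), mul_comm]
  rw [hcomm]
  have := abs_le.1 hsymm
  exact abs_le.2 ⟨by linarith, by linarith⟩

/-- Replacing some of the bandwidths `h` by `h'`, both dominated by `H` wherever they differ,
changes the smoothed density by at most twice the corresponding terms of the bias bound at `H`. -/
lemma Pclass.abs_smooth_piecewise_sub_le {d : ℕ} {K : Vec d → ℝ} (hK : IsProductKernel d K)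
    {β : Vec d} (hβ : ∀ i, 0 < β i ∧ β i ≤ 2) {L : ℝ} (hL : 0 < L)
    {p : Vec d → ℝ} (hp : Pclass d β L p) (t : Vec d) {h h' H : Vec d}
    (hh : ∀ i, 0 ≤ h i ∧ h i ≤ 1) (hh' : ∀ i, 0 ≤ h' i ∧ h' i ≤ 1) (hH : ∀ i, 0 ≤ H i)
    (hdiff : ∀ i, h' i = h i ∨ h' i ≤ H i ∧ h i ≤ H i) (s : Finset (Fin d)) :
    |(∫ x, K x * p (fun j => t j - s.piecewise h' h j * x j)) -
        ∫ x, K x * p (fun j => t j - h j * x j)| ≤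
      2 * (L * ∑ i ∈ s, (∫ x : Vec d, |x i| ^ β i * |K x|) * H i ^ β i) := by
  induction s using Finset.induction_on with
  | empty => simp
  | insert i s his ih =>
    have hc : 0 ≤ ∫ x : Vec d, |x i| ^ β i * |K x| := integral_nonneg fun x => by positivity
    have hpw : ∀ j, |s.piecewise h' h j| ≤ 1 := fun j => by
      by_cases hj : j ∈ s
      · simpa [hj, abs_of_nonneg (hh' j).1] using (hh' j).2
      · simpa [hj, abs_of_nonneg (hh j).1] using (hh j).2
    have hself : Function.update (s.piecewise h' h) i (h i) = s.piecewise h' h := by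
      rw [← Finset.piecewise_eq_of_notMem s h' h his, Function.update_eq_self]
    have hterm : |(∫ x, K x * p (fun j => t j - (insert i s).piecewise h' h j * x j)) -
        ∫ x, K x * p (fun j => t j - s.piecewise h' h j * x j)| ≤
        2 * (L * ((∫ x : Vec d, |x i| ^ β i * |K x|) * H i ^ β i)) := by
      rw [Finset.piecewise_insert]
      rcases hdiff i with heq | ⟨hle', hle⟩
      · rw [heq, hself, sub_self, abs_zero]
        have := Real.rpow_nonneg (hH i) (β i)
        positivity
      · have h1 := hp.abs_smooth_update_sub_le hK hβ hL t hpw i (hh' i).1 (hh' i).2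
        have h2 := hp.abs_smooth_update_sub_le hK hβ hL t hpw i (hh i).1 (hh i).2
        rw [hself] at h2
        have hmono : ∀ b : ℝ, 0 ≤ b → b ≤ H i →
            L * ((∫ x : Vec d, |x i| ^ β i * |K x|) * b ^ β i) ≤
              L * ((∫ x : Vec d, |x i| ^ β i * |K x|) * H i ^ β i) := fun b hb hbH =>
          mul_le_mul_of_nonneg_left (mul_le_mul_of_nonneg_left
            (Real.rpow_le_rpow hb hbH (hβ i).1.le) hc) hL.le
        have h3 := abs_le.1 (h1.trans (hmono _ (hh' i).1 hle'))
        have h4 := abs_le.1 (h2.trans (hmono _ (hh i).1 hle))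
        exact abs_le.2 ⟨by linarith, by linarith⟩
    rw [Finset.sum_insert his, mul_add, mul_add]
    exact (abs_sub_le _ _ _).trans (add_le_add hterm ih)

/-- Lemma 5.7, bias difference bound.
For all multi-indices `k, l ∈ 𝒥` and all `t`:
`|b_t(k ∧ l) - b_t(l)| ≤ 2 B_t(k)`, where `k ∧ l` is the componentwise minimum. -/
theorem statement15 (d : ℕ) (hd : 1 ≤ d) (K : Vec d → ℝ) (hK : IsProductKernel d K)
    (β : Vec d) (hβ : ∀ i, 0 < β i ∧ β i ≤ 2) (L : ℝ) (hL : 0 < L)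
    (p : Vec d → ℝ) (hp : Pclass d β L p) (n : ℕ) (hn : 2 ≤ n)
    (k l : Fin d → ℕ) (hk : gridOK d n k) (hl : gridOK d n l) (t : Vec d) :
    |biasAt d K p (bwOf d (fun i => min (k i) (l i))) t - biasAt d K p (bwOf d l) t| ≤
      2 * biasBound d K β L (bwOf d k) := by
  have hpos : ∀ (j : Fin d → ℕ) (i : Fin d), 0 < bwOf d j i := fun j i =>
    Real.rpow_pos_of_pos two_pos _
  have hunit : ∀ (j : Fin d → ℕ) (i : Fin d), 0 ≤ bwOf d j i ∧ bwOf d j i ≤ 1 := fun j i =>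
    ⟨(hpos j i).le, Real.rpow_le_one_of_one_le_of_nonpos one_le_two (by simp)⟩
  have hdiff : ∀ i, bwOf d (fun i => min (k i) (l i)) i = bwOf d l i ∨
      bwOf d (fun i => min (k i) (l i)) i ≤ bwOf d k i ∧ bwOf d l i ≤ bwOf d k i := fun i => by
    rcases le_total (l i) (k i) with h | h
    · exact Or.inl (by simp only [bwOf, min_eq_right h])
    · refine Or.inr ⟨by simp only [bwOf, min_eq_left h, le_refl], ?_⟩
      exact Real.rpow_le_rpow_of_exponent_le one_le_two (neg_le_neg (Nat.cast_le.2 h))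
  have hmain := hp.abs_smooth_piecewise_sub_le hK hβ hL t (hunit l)
    (hunit fun i => min (k i) (l i)) (fun i => (hpos k i).le) hdiff Finset.univ
  rw [biasAt_eq K p _ (hpos _), biasAt_eq K p _ (hpos _), sub_sub_sub_cancel_left, abs_sub_comm]
  simpa only [Finset.piecewise_univ, biasBound] using hmain
end

section
/- (Bernstein bound (3.8) for the empirical variance ratio.) Let h = (h_1,…,h_d) with h_i > 0 and t ∈ ℝ^d be such that σ_t²(h) > 0. Then for every η > 0: P^{⊗n}( | σ̃_t²(h) / σ_t²(h) − 1 | ≥ η ) ≤ 2 exp( − 3η² / ( 2(3+2η) ‖K‖_sup² ) · σ_t²(h) · n² ∏_{i=1}^d h_i² ). -/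
open MeasureTheory Real
open scoped ENNReal BigOperators

/-- Chord bound for the exponential on `[0, 1]`. -/
lemma exp_mul_le_one_add_mul (l : ℝ) {z : ℝ} (hz₀ : 0 ≤ z) (hz₁ : z ≤ 1) :
    exp (l * z) ≤ 1 + z * (exp l - 1) := by
  have hconv := convexOn_exp.2 (Set.mem_univ (0 : ℝ)) (Set.mem_univ l) (sub_nonneg.2 hz₁) hz₀
    (by ring)
  simp only [smul_eq_mul, mul_zero, zero_add, exp_zero, mul_one] at hconv
  rw [mul_comm l z]
  linarith

lemma bernstein_exponent_upper {η : ℝ} (hη : 0 < η) :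
    η - log (1 + η) * (1 + η) ≤ -(3 * η ^ 2) / (2 * (3 + 2 * η)) := by
  have hlog := mul_le_mul_of_nonneg_right (le_log_one_add_of_nonneg hη.le)
    (by positivity : 0 ≤ 1 + η)
  have hcmp : η - 2 * η / (η + 2) * (1 + η) ≤ -(3 * η ^ 2) / (2 * (3 + 2 * η)) := by
    have hdiff : -(3 * η ^ 2) / (2 * (3 + 2 * η)) - (η - 2 * η / (η + 2) * (1 + η))
        = η ^ 3 / ((η + 2) * (2 * (3 + 2 * η))) := by
      field_simp
      ring
    have hpos : 0 ≤ η ^ 3 / ((η + 2) * (2 * (3 + 2 * η))) := by positivity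
    linarith
  linarith

lemma exp_neg_le_quadratic {x : ℝ} (hx : 0 ≤ x) : exp (-x) ≤ 1 - x + x ^ 2 / 2 := by
  rw [exp_neg, inv_le_iff_one_le_mul₀ (exp_pos x)]
  have hquad := quadratic_le_exp_of_nonneg hx
  have hnonneg : 0 ≤ 1 - x + x ^ 2 / 2 := by nlinarith [sq_nonneg (x - 1)]
  nlinarith [mul_le_mul_of_nonneg_left hquad hnonneg, sq_nonneg (x ^ 2)]

lemma bernstein_exponent_lower {η : ℝ} (hη : 0 < η) :
    exp (-η) - 1 + η * (1 - η) ≤ -(3 * η ^ 2) / (2 * (3 + 2 * η)) := by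
  have hexp := exp_neg_le_quadratic hη.le
  have hcmp : -(η ^ 2) / 2 ≤ -(3 * η ^ 2) / (2 * (3 + 2 * η)) := by
    rw [div_le_div_iff₀ (by norm_num) (by positivity)]
    nlinarith [pow_pos hη 3]
  linarith

section Chernoff

variable {Ω : Type*} [MeasurableSpace Ω] {P : Measure Ω} [IsProbabilityMeasure P] {f : Ω → ℝ}

lemma integrable_of_unit_interval (hf : Measurable f) (hf₀ : ∀ x, 0 ≤ f x) (hf₁ : ∀ x, f x ≤ 1) :
    Integrable f P :=
  Integrable.of_bound hf.aestronglyMeasurable 1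
    (ae_of_all _ fun x => by rw [norm_of_nonneg (hf₀ x)]; exact hf₁ x)

lemma integrable_exp_mul_of_unit_interval (hf : Measurable f) (hf₀ : ∀ x, 0 ≤ f x)
    (hf₁ : ∀ x, f x ≤ 1) (l : ℝ) : Integrable (fun x => exp (l * f x)) P := by
  refine Integrable.of_bound (by fun_prop) (exp |l|) (ae_of_all _ fun x => ?_)
  rw [norm_of_nonneg (exp_pos _).le, exp_le_exp]
  calc l * f x ≤ |l| * f x := mul_le_mul_of_nonneg_right (le_abs_self l) (hf₀ x)
    _ ≤ |l| := mul_le_of_le_one_right (abs_nonneg l) (hf₁ x)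

/-- A `[0, 1]`-valued variable has a moment generating function of at most Poisson size. -/
lemma mgf_le_of_unit_interval (hf : Measurable f) (hf₀ : ∀ x, 0 ≤ f x) (hf₁ : ∀ x, f x ≤ 1)
    (l : ℝ) : ProbabilityTheory.mgf f P l ≤ exp ((∫ x, f x ∂P) * (exp l - 1)) := by
  have hfi := integrable_of_unit_interval (P := P) hf hf₀ hf₁
  calc ∫ x, exp (l * f x) ∂P
      ≤ ∫ x, 1 + f x * (exp l - 1) ∂P :=
        integral_mono (integrable_exp_mul_of_unit_interval hf hf₀ hf₁ l)
          ((integrable_const 1).add (hfi.mul_const _))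
          fun x => exp_mul_le_one_add_mul l (hf₀ x) (hf₁ x)
    _ = (∫ x, f x ∂P) * (exp l - 1) + 1 := by
        rw [integral_add (integrable_const 1) (hfi.mul_const _), integral_mul_const]
        simp [add_comm]
    _ ≤ exp ((∫ x, f x ∂P) * (exp l - 1)) := add_one_le_exp _

lemma mgf_sum_pi (n : ℕ) (l : ℝ) :
    ProbabilityTheory.mgf (fun X : Fin n → Ω => ∑ i, f (X i)) (Measure.pi fun _ => P) l
      = ProbabilityTheory.mgf f P l ^ n := by
  have hprod := integral_fintype_prod_eq_pow (ι := Fin n) (fun x => exp (l * f x)) (μ := P)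
  simpa only [ProbabilityTheory.mgf, Finset.mul_sum, exp_sum, Fintype.card_fin] using hprod

lemma exp_mul_mgf_sum_le (hf : Measurable f) (hf₀ : ∀ x, 0 ≤ f x) (hf₁ : ∀ x, f x ≤ 1)
    (n : ℕ) (l a : ℝ) :
    exp (-l * (a * (n * ∫ x, f x ∂P))) *
        ProbabilityTheory.mgf (fun X : Fin n → Ω => ∑ i, f (X i)) (Measure.pi fun _ => P) l
      ≤ exp ((exp l - 1 - l * a) * (n * ∫ x, f x ∂P)) := by
  rw [mgf_sum_pi]
  calc _ ≤ exp (-l * (a * (n * ∫ x, f x ∂P))) * exp ((∫ x, f x ∂P) * (exp l - 1)) ^ n := by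
        gcongr
        · exact ProbabilityTheory.mgf_nonneg
        · exact mgf_le_of_unit_interval hf hf₀ hf₁ l
    _ = _ := by
        rw [← exp_nat_mul, ← exp_add]
        ring_nf

/-- Two-sided multiplicative Bernstein inequality for sums of i.i.d. `[0, 1]`-valued variables. -/
lemma bernstein_sum_of_unit_interval (hf : Measurable f) (hf₀ : ∀ x, 0 ≤ f x)
    (hf₁ : ∀ x, f x ≤ 1) (n : ℕ) {η : ℝ} (hη : 0 < η) :
    (Measure.pi fun _ : Fin n => P).real
        {X | η * (n * ∫ x, f x ∂P) ≤ |∑ i, f (X i) - n * ∫ x, f x ∂P|}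
      ≤ 2 * exp (-(3 * η ^ 2) / (2 * (3 + 2 * η)) * (n * ∫ x, f x ∂P)) := by
  set s : ℝ := n * ∫ x, f x ∂P with hs
  have hs₀ : 0 ≤ s := mul_nonneg n.cast_nonneg (integral_nonneg hf₀)
  have hint (l : ℝ) : Integrable (fun X : Fin n → Ω => exp (l * ∑ i, f (X i)))
      (Measure.pi fun _ => P) := by
    simp only [Finset.mul_sum, exp_sum]
    exact Integrable.fintype_prod fun _ => integrable_exp_mul_of_unit_interval hf hf₀ hf₁ l
  have hupper : (Measure.pi fun _ : Fin n => P).real {X | (1 + η) * s ≤ ∑ i, f (X i)}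
      ≤ exp (-(3 * η ^ 2) / (2 * (3 + 2 * η)) * s) := by
    refine (ProbabilityTheory.measure_ge_le_exp_mul_mgf _ (log_nonneg (by linarith))
      (hint (log (1 + η)))).trans ((exp_mul_mgf_sum_le hf hf₀ hf₁ n _ _).trans ?_)
    rw [exp_le_exp]
    refine mul_le_mul_of_nonneg_right ?_ hs₀
    rw [exp_log (by linarith)]
    linarith [bernstein_exponent_upper hη]
  have hlower : (Measure.pi fun _ : Fin n => P).real {X | ∑ i, f (X i) ≤ (1 - η) * s}
      ≤ exp (-(3 * η ^ 2) / (2 * (3 + 2 * η)) * s) := by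
    refine (ProbabilityTheory.measure_le_le_exp_mul_mgf _ (by linarith : -η ≤ 0)
      (hint (-η))).trans ((exp_mul_mgf_sum_le hf hf₀ hf₁ n _ _).trans ?_)
    rw [exp_le_exp]
    refine mul_le_mul_of_nonneg_right ?_ hs₀
    linarith [bernstein_exponent_lower hη]
  have hsub : {X : Fin n → Ω | η * s ≤ |∑ i, f (X i) - s|}
      ⊆ {X | (1 + η) * s ≤ ∑ i, f (X i)} ∪ {X | ∑ i, f (X i) ≤ (1 - η) * s} := by
    intro X hX
    rcases le_abs.1 (Set.mem_ofPred_eq ▸ hX) with hle | hle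
    · exact Or.inl (by rw [Set.mem_ofPred_eq]; linarith)
    · exact Or.inr (by rw [Set.mem_ofPred_eq]; linarith)
  linarith [measureReal_mono (μ := Measure.pi fun _ : Fin n => P) hsub (measure_ne_top _ _),
    measureReal_union_le (μ := Measure.pi fun _ : Fin n => P)
      {X | (1 + η) * s ≤ ∑ i, f (X i)} {X | ∑ i, f (X i) ≤ (1 - η) * s}]

end Chernoff

lemma IsProbDensity.isProbabilityMeasure {d : ℕ} {p : Vec d → ℝ} (hp : IsProbDensity d p) :
    IsProbabilityMeasure (pdfMeasure d p) := by
  obtain ⟨-, hp₀, hp₁⟩ := hp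
  have hpi : Integrable p := by
    by_contra hni
    rw [integral_undef hni] at hp₁
    exact zero_ne_one hp₁
  exact ⟨by rw [pdfMeasure, withDensity_apply _ MeasurableSet.univ, Measure.restrict_univ,
    ← ofReal_integral_eq_lintegral_ofReal hpi (ae_of_all _ hp₀), hp₁, ENNReal.ofReal_one]⟩

lemma IsProbDensity.integral_pdfMeasure {d : ℕ} {p : Vec d → ℝ} (hp : IsProbDensity d p)
    (g : Vec d → ℝ) : ∫ y, g y ∂pdfMeasure d p = ∫ y, g y * p y := by
  rw [pdfMeasure, integral_withDensity_eq_integral_toReal_smul hp.1.ennreal_ofReal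
    (ae_of_all _ fun _ => ENNReal.ofReal_lt_top)]
  simp only [ENNReal.toReal_ofReal (hp.2.1 _), smul_eq_mul, mul_comm]

lemma IsProductKernel.measurable {d : ℕ} {K : Vec d → ℝ} (hK : IsProductKernel d K) :
    Measurable K := by
  obtain ⟨Ki, hprod, hKi⟩ := hK
  have hmeas (i : Fin d) : Measurable (Ki i) := by
    obtain ⟨-, -, hsupp, hcont, -, -⟩ := hKi i
    refine measurable_of_restrict_of_restrict_compl (s := Set.Icc (-1 : ℝ) 1) measurableSet_Icc
      (continuousOn_iff_continuous_domRestrict.1 hcont).measurable ?_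
    have hzero : (Set.Icc (-1 : ℝ) 1)ᶜ.domRestrict (Ki i) = fun _ => 0 :=
      funext fun y => hsupp y y.2
    rw [hzero]
    exact measurable_const
  rw [funext hprod]
  exact Finset.measurable_fun_prod _ fun i _ => (hmeas i).comp (measurable_pi_apply i)

lemma IsProductKernel.bddAbove_range_abs {d : ℕ} {K : Vec d → ℝ} (hK : IsProductKernel d K) :
    BddAbove (Set.range fun x => |K x|) := by
  obtain ⟨Ki, hprod, hKi⟩ := hK
  have hbdd (i : Fin d) : ∃ C, ∀ y, Ki i y ≤ C := by
    obtain ⟨-, -, hsupp, hcont, -, -⟩ := hKi i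
    obtain ⟨C, hC⟩ := isCompact_Icc.bddAbove_image hcont
    refine ⟨max C 0, fun y => ?_⟩
    by_cases hy : y ∈ Set.Icc (-1 : ℝ) 1
    · exact le_max_of_le_left (hC (Set.mem_image_of_mem _ hy))
    · exact (hsupp y hy).trans_le (le_max_right _ _)
  choose C hC using hbdd
  refine ⟨∏ i, C i, ?_⟩
  rintro - ⟨x, rfl⟩
  have hnonneg (i : Fin d) : 0 ≤ Ki i (x i) := (hKi i).1 (x i)
  simp only [hprod x, abs_of_nonneg (Finset.prod_nonneg fun i _ => hnonneg i)]
  exact Finset.prod_le_prod (fun i _ => hnonneg i) fun i _ => hC i (x i)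

lemma IsProductKernel.abs_le_KsupNorm {d : ℕ} {K : Vec d → ℝ} (hK : IsProductKernel d K)
    (x : Vec d) : |K x| ≤ KsupNorm d K :=
  le_ciSup hK.bddAbove_range_abs x

lemma IsProductKernel.KsupNorm_pos {d : ℕ} {K : Vec d → ℝ} (hK : IsProductKernel d K) :
    0 < KsupNorm d K := by
  refine lt_of_lt_of_le ?_ (hK.abs_le_KsupNorm 0)
  obtain ⟨Ki, hprod, hKi⟩ := hK
  rw [hprod]
  exact abs_pos.2 (Finset.prod_pos fun i _ => (hKi i).2.2.2.2.2).ne'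

/-- Bernstein bound (3.8) for the empirical variance ratio.
If `σ_t²(h) > 0`, then for every `η > 0`:
`P^{⊗n}( |σ̃_t²(h)/σ_t²(h) - 1| ≥ η )
  ≤ 2 exp( -3η²/(2(3+2η)‖K‖_sup²) · σ_t²(h) · n² ∏ h_i² )`. -/
theorem statement17 (d : ℕ) (hd : 1 ≤ d) (K : Vec d → ℝ) (hK : IsProductKernel d K)
    (p : Vec d → ℝ) (hp : IsProbDensity d p) (n : ℕ) (hn : 2 ≤ n)
    (h : Vec d) (hh : ∀ i, 0 < h i) (t : Vec d)
    (hσ : 0 < sigmaSq d n K p h t) (η : ℝ) (hη : 0 < η) :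
    jointMeasure d n p
        {X | η ≤ |sigmaTildeSq d n K h X t / sigmaSq d n K p h t - 1|} ≤
      ENNReal.ofReal
        (2 * Real.exp (-(3 * η ^ 2) / (2 * (3 + 2 * η) * (KsupNorm d K) ^ 2) *
          (sigmaSq d n K p h t * ((n : ℝ) ^ 2 * ∏ i, h i ^ 2)))) := by
  have := hp.isProbabilityMeasure
  set M := KsupNorm d K with hM
  have hM₀ : 0 < M := hK.KsupNorm_pos
  set f : Vec d → ℝ := fun y => (K fun j => (t j - y j) / h j) ^ 2 / M ^ 2 with hf
  have hfm : Measurable f := by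
    have hKm := hK.measurable
    fun_prop
  have hf₀ (y : Vec d) : 0 ≤ f y := by positivity
  have hf₁ (y : Vec d) : f y ≤ 1 := by
    refine div_le_one_of_le₀ ?_ (by positivity)
    rw [← sq_abs (K _)]
    exact pow_le_pow_left₀ (abs_nonneg _) (hK.abs_le_KsupNorm _) 2
  have hn₀ : (0 : ℝ) < n := by exact_mod_cast (by omega : 0 < n)
  have hH₀ : 0 < ∏ i, h i := Finset.prod_pos fun i _ => hh i
  have hsigma : sigmaSq d n K p h t
      = M ^ 2 / (n ^ 2 * (∏ i, h i) ^ 2) * (n * ∫ y, f y ∂pdfMeasure d p) := by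
    have hintegrand (y : Vec d) : scaledKernel d K h (fun i => t i - y i) ^ 2 * p y
        = M ^ 2 / (∏ i, h i) ^ 2 * (f y * p y) := by
      simp only [scaledKernel, hf]
      field_simp
    simp only [sigmaSq, hintegrand, integral_const_mul, hp.integral_pdfMeasure]
    field_simp
  have htilde (X : Sample d n) : sigmaTildeSq d n K h X t
      = M ^ 2 / (n ^ 2 * (∏ i, h i) ^ 2) * ∑ i, f (X i) := by
    simp only [sigmaTildeSq, hf, ← Finset.sum_div]
    field_simp
  set s : ℝ := n * ∫ y, f y ∂pdfMeasure d p with hs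
  have hs₀ : 0 < s := pos_of_mul_pos_right (hsigma ▸ hσ) (by positivity)
  have hevent : {X | η ≤ |sigmaTildeSq d n K h X t / sigmaSq d n K p h t - 1|}
      = {X | η * s ≤ |∑ i, f (X i) - s|} := by
    ext X
    have hratio : sigmaTildeSq d n K h X t / sigmaSq d n K p h t - 1
        = (∑ i, f (X i) - s) / s := by
      rw [hsigma, htilde, mul_div_mul_left _ _ (by positivity), sub_div, div_self hs₀.ne']
    rw [Set.mem_ofPred_eq, Set.mem_ofPred_eq, hratio, abs_div, abs_of_pos hs₀, le_div_iff₀ hs₀]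
  have hexponent : -(3 * η ^ 2) / (2 * (3 + 2 * η) * M ^ 2) *
        (sigmaSq d n K p h t * ((n : ℝ) ^ 2 * ∏ i, h i ^ 2))
      = -(3 * η ^ 2) / (2 * (3 + 2 * η)) * s := by
    rw [hsigma, Finset.prod_pow]
    field_simp
  have : IsProbabilityMeasure (jointMeasure d n p) := by
    unfold jointMeasure
    infer_instance
  rw [hevent, hexponent, ← ofReal_measureReal]
  exact ENNReal.ofReal_le_ofReal (bernstein_sum_of_unit_interval hfm hf₀ hf₁ n hη)
end
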